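/- Let U be an open neighborhood of (0,0) in ℝ² contained in {|η| + |ε| < 1/100}, and suppose ν : U → ℝ and Ψ : U × [0,π] → ℝ are real-analytic functions such that for every (η,ε) ∈ U: the function x ↦ Ψ(η,ε,x) satisfies T̃_{η,ε}Ψ(η,ε,·) + ν(η,ε)·Ψ(η,ε,·) = 0 on (0,π), ∂_x Ψ(η,ε,0) = ∂_x Ψ(η,ε,π) = 0, and the normalization ∫₀^π Ψ(η,ε,x) cos(2x) dx = π/2; and suppose ν(0,0) = 4 and Ψ(0,0,x) = cos(2x). Then there exist a constant C > 0 and a neighborhood V ⊆ U of (0,0) such that |ν(η,ε) − 4| ≤ C(η² + ε²) for all (η,ε) ∈ V. -/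

import Mathlib

open Set Real

noncomputable section

/-- The operator `T̃_{η,ε} u = u'' − [η(1+ε)/(1−η(1+ε)x)] u'`, with derivatives taken
within `[0,π]`. -/
def Ttde (η ε : ℝ) (u : ℝ → ℝ) (x : ℝ) : ℝ :=
  derivWithin (derivWithin u (Set.Icc 0 π)) (Set.Icc 0 π) x
    - (η * (1 + ε) / (1 - η * (1 + ε) * x)) * derivWithin u (Set.Icc 0 π) x

/-- First-order expansion of the third Neumann eigenvalue branch of
`T̃_{η,ε}`: `ν(η,ε) = 4 + O(η² + ε²)`. -/
theorem third_neumann_branch_first_order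
    (U : Set (ℝ × ℝ)) (hUopen : IsOpen U) (hU0 : (0, 0) ∈ U)
    (hUsub : U ⊆ {p : ℝ × ℝ | |p.1| + |p.2| < 1/100})
    (ν : ℝ × ℝ → ℝ) (Ψ : ℝ × ℝ → ℝ → ℝ)
    (hν : AnalyticOnNhd ℝ ν U)
    (hΨ : AnalyticOnNhd ℝ (fun q : (ℝ × ℝ) × ℝ => Ψ q.1 q.2) (U ×ˢ Set.Icc 0 π))
    (heq : ∀ p ∈ U, ∀ x ∈ Set.Ioo (0:ℝ) π, Ttde p.1 p.2 (Ψ p) x + ν p * Ψ p x = 0)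
    (hbc : ∀ p ∈ U, derivWithin (Ψ p) (Set.Icc 0 π) 0 = 0 ∧
      derivWithin (Ψ p) (Set.Icc 0 π) π = 0)
    (hnorm : ∀ p ∈ U, ∫ x in (0:ℝ)..π, Ψ p x * Real.cos (2*x) = π/2)
    (hν0 : ν (0, 0) = 4)
    (hΨ0 : ∀ x ∈ Set.Icc (0:ℝ) π, Ψ (0, 0) x = Real.cos (2*x)) :
    ∃ C > (0:ℝ), ∃ V ⊆ U, IsOpen V ∧ (0, 0) ∈ V ∧
      ∀ p ∈ V, |ν p - 4| ≤ C * (p.1^2 + p.2^2) := by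
  set F : (ℝ × ℝ) × ℝ → ℝ := fun q => Ψ q.1 q.2 with hF
  set G : (ℝ × ℝ) × ℝ → ℝ := fun q => fderiv ℝ F q (0, 1) with hGdef
  have hG : ∀ q ∈ U ×ˢ Set.Icc (0:ℝ) π, AnalyticAt ℝ G q := by
    intro q hq
    exact ((ContinuousLinearMap.apply ℝ ℝ ((0 : ℝ × ℝ), (1:ℝ))).analyticAt _).comp (hΨ q hq).fderiv
  have hpath : ∀ (p : ℝ × ℝ) (x : ℝ), HasDerivAt (fun y : ℝ => (p, y)) ((0 : ℝ × ℝ), (1:ℝ)) x := by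
    intro p x
    exact (hasDerivAt_const x p).prodMk (hasDerivAt_id x)
  have hd1 : ∀ p ∈ U, ∀ x ∈ Set.Icc (0:ℝ) π, HasDerivAt (Ψ p) (G (p, x)) x := by
    intro p hp x hx
    have h1 := (hΨ (p, x) ⟨hp, hx⟩).differentiableAt.hasFDerivAt
    exact h1.comp_hasDerivAt x (hpath p x)
  set H : (ℝ × ℝ) × ℝ → ℝ := fun q => fderiv ℝ G q (0, 1) with hHdef
  have hd2 : ∀ p ∈ U, ∀ x ∈ Set.Icc (0:ℝ) π, HasDerivAt (fun y => G (p, y)) (H (p, x)) x := by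
    intro p hp x hx
    have h1 := (hG (p, x) ⟨hp, hx⟩).differentiableAt.hasFDerivAt
    exact h1.comp_hasDerivAt x (hpath p x)
  have hHc : ∀ p ∈ U, ContinuousOn (fun y => H (p, y)) (Set.Icc 0 π) := by
    intro p hp x hx
    have h1 : AnalyticAt ℝ H (p, x) :=
      ((ContinuousLinearMap.apply ℝ ℝ ((0 : ℝ × ℝ), (1:ℝ))).analyticAt _).comp
        (hG (p, x) ⟨hp, hx⟩).fderiv
    have h2 : ContinuousAt (fun y => H (p, y)) x :=
      ContinuousAt.comp (f := fun y : ℝ => (p, y)) (g := H) h1.continuousAt (by fun_prop)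
    exact h2.continuousWithinAt
  have hGc : ∀ p ∈ U, ContinuousOn (fun y => G (p, y)) (Set.Icc 0 π) := fun p hp x hx =>
    (hd2 p hp x hx).continuousAt.continuousWithinAt
  have hΨc : ∀ p ∈ U, ContinuousOn (Ψ p) (Set.Icc 0 π) := fun p hp x hx =>
    (hd1 p hp x hx).continuousAt.continuousWithinAt
  have hud : UniqueDiffOn ℝ (Set.Icc (0:ℝ) π) := uniqueDiffOn_Icc Real.pi_pos
  have hw1 : ∀ p ∈ U, ∀ x ∈ Set.Icc (0:ℝ) π, derivWithin (Ψ p) (Set.Icc 0 π) x = G (p, x) :=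
    fun p hp x hx => (hd1 p hp x hx).hasDerivWithinAt.derivWithin (hud x hx)
  have hw2 : ∀ p ∈ U, ∀ x ∈ Set.Icc (0:ℝ) π,
      derivWithin (derivWithin (Ψ p) (Set.Icc 0 π)) (Set.Icc 0 π) x = H (p, x) := by
    intro p hp x hx
    rw [derivWithin_congr (fun y hy => hw1 p hp y hy) (hw1 p hp x hx)]
    exact (hd2 p hp x hx).hasDerivWithinAt.derivWithin (hud x hx)
  have hu0 : ∀ x ∈ Set.Icc (0:ℝ) π, G ((0, 0), x) = -2 * Real.sin (2 * x) := by
    intro x hx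
    rw [← hw1 _ hU0 x hx, derivWithin_congr (fun y hy => hΨ0 y hy) (hΨ0 x hx)]
    have h : HasDerivAt (fun y : ℝ => Real.cos (2 * y)) (-2 * Real.sin (2 * x)) x := by
      have hl : HasDerivAt (fun y : ℝ => 2 * y) 2 x := by
        simpa using (hasDerivAt_id x).const_mul (2:ℝ)
      refine hl.cos.congr_deriv ?_
      ring
    exact h.hasDerivWithinAt.derivWithin (hud x hx)
  have hpi : (0:ℝ) ≤ π := Real.pi_pos.le
  -- uniform Lipschitz estimate
  have hLip : ∃ K : ℝ, ∀ᶠ p in nhds ((0, 0) : ℝ × ℝ), ∀ x ∈ Set.Icc (0:ℝ) π,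
      |G (p, x) - G ((0, 0), x)| ≤ K * ‖p‖ := by
    refine isCompact_Icc.induction_on (p := fun s : Set ℝ => ∃ K : ℝ,
      ∀ᶠ p in nhds ((0, 0) : ℝ × ℝ), ∀ x ∈ s, |G (p, x) - G ((0, 0), x)| ≤ K * ‖p‖) ?_ ?_ ?_ ?_
    · exact ⟨0, by simp⟩
    · rintro s t hst ⟨K, hK⟩
      exact ⟨K, hK.mono fun p hp x hx => hp x (hst hx)⟩
    · rintro s t ⟨K, hK⟩ ⟨L, hL⟩
      refine ⟨max K L, ?_⟩
      filter_upwards [hK, hL] with p h1 h2 x hx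
      rcases hx with hx | hx
      · exact (h1 x hx).trans (mul_le_mul_of_nonneg_right (le_max_left _ _) (norm_nonneg _))
      · exact (h2 x hx).trans (mul_le_mul_of_nonneg_right (le_max_right _ _) (norm_nonneg _))
    · intro x hx
      have h1 : ContDiffAt ℝ 1 G ((0, 0), x) := (hG ((0, 0), x) ⟨hU0, hx⟩).contDiffAt
      obtain ⟨K, t, ht, hKt⟩ := h1.exists_lipschitzOnWith
      rw [nhds_prod_eq, Filter.mem_prod_iff] at ht
      obtain ⟨A, hA, B, hB, hAB⟩ := ht
      refine ⟨B, mem_nhdsWithin_of_mem_nhds hB, K, ?_⟩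
      filter_upwards [hA] with p hp y hy
      have h2 := hKt.dist_le_mul (p, y) (hAB ⟨hp, hy⟩) ((0, 0), y)
        (hAB ⟨mem_of_mem_nhds hA, hy⟩)
      rw [Real.dist_eq] at h2
      have h3 : dist (p, y) (((0:ℝ), (0:ℝ)), y) = ‖p‖ := by
        rw [Prod.dist_eq, dist_self, max_eq_left dist_nonneg]
        exact dist_zero_right p
      rwa [h3] at h2
  obtain ⟨K, hK⟩ := hLip
  -- integral identity
  have hid : ∀ p ∈ U, ∫ x in (0:ℝ)..π, (H (p, x) + 4 * Ψ p x) * Real.cos (2 * x) = 0 := by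
    intro p hp
    have h := intervalIntegral.integral_eq_sub_of_hasDerivAt (a := 0) (b := π)
      (f := fun x => G (p, x) * Real.cos (2 * x) + 2 * (Ψ p x * Real.sin (2 * x)))
      (f' := fun x => (H (p, x) + 4 * Ψ p x) * Real.cos (2 * x)) ?_ ?_
    · rw [h]
      have e1 : G (p, π) = 0 := by rw [← hw1 p hp π ⟨hpi, le_rfl⟩]; exact (hbc p hp).2
      have e2 : G (p, 0) = 0 := by rw [← hw1 p hp 0 ⟨le_rfl, hpi⟩]; exact (hbc p hp).1
      simp [e1, e2]
    · intro x hx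
      rw [Set.uIcc_of_le hpi] at hx
      have hl : HasDerivAt (fun y : ℝ => 2 * y) 2 x := by
        simpa using (hasDerivAt_id x).const_mul (2:ℝ)
      have := ((hd2 p hp x hx).mul hl.cos).add (((hd1 p hp x hx).mul hl.sin).const_mul 2)
      refine this.congr_deriv ?_
      ring
    · apply ContinuousOn.intervalIntegrable
      rw [Set.uIcc_of_le hpi]
      exact ((hHc p hp).add (continuousOn_const.mul (hΨc p hp))).mul (by fun_prop)
  have hsc : ∫ x in (0:ℝ)..π, Real.sin (2 * x) * Real.cos (2 * x) = 0 := by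
    have h := intervalIntegral.integral_eq_sub_of_hasDerivAt (a := 0) (b := π)
      (f := fun x => Real.sin (2 * x) ^ 2 / 4)
      (f' := fun x => Real.sin (2 * x) * Real.cos (2 * x)) ?_ ?_
    · rw [h]; simp
    · intro x hx
      have hl : HasDerivAt (fun y : ℝ => 2 * y) 2 x := by
        simpa using (hasDerivAt_id x).const_mul (2:ℝ)
      refine ((hl.sin.pow 2).div_const 4).congr_deriv ?_
      simp only [Nat.cast_ofNat, Nat.add_one_sub_one, pow_one]
      ring
    · apply Continuous.intervalIntegrable
      fun_prop
  have hp4 := Real.pi_le_four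
  have hsmall : ∀ p ∈ U, |p.1 * (1 + p.2)| ≤ 2 * ‖p‖ ∧ |p.1 * (1 + p.2)| ≤ 1 / 50 := by
    intro p hp
    have h := hUsub hp
    simp only [Set.mem_ofPred_eq] at h
    have h1 : |p.1| ≤ ‖p‖ := norm_fst_le p
    have h2 := abs_nonneg p.1
    have h3 := abs_nonneg p.2
    have h4 : |1 + p.2| ≤ 2 := by
      have := abs_add_le 1 p.2
      rw [abs_one] at this
      linarith
    rw [abs_mul]
    constructor <;> nlinarith [abs_nonneg (1 + p.2)]
  have hb : ∀ p ∈ U, ∀ x ∈ Set.Icc (0:ℝ) π, 1 / 2 ≤ 1 - p.1 * (1 + p.2) * x := by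
    intro p hp x hx
    have h1 := (hsmall p hp).2
    have h2 : p.1 * (1 + p.2) * x ≤ |p.1 * (1 + p.2)| * x :=
      mul_le_mul_of_nonneg_right (le_abs_self _) hx.1
    nlinarith [hx.1, hx.2, abs_nonneg (p.1 * (1 + p.2))]
  have hkey : ∀ p ∈ U, (ν p - 4) * (π / 2) = ∫ x in (0:ℝ)..π,
      (p.1 * (1 + p.2) / (1 - p.1 * (1 + p.2) * x) * G (p, x)
        - p.1 * (1 + p.2) * (-2 * Real.sin (2 * x))) * Real.cos (2 * x) := by
    intro p hp
    have hcos : ContinuousOn (fun x : ℝ => Real.cos (2 * x)) (Set.Icc 0 π) := by fun_prop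
    have i1 : IntervalIntegrable (fun x => (H (p, x) + 4 * Ψ p x) * Real.cos (2 * x))
        MeasureTheory.volume 0 π := by
      apply ContinuousOn.intervalIntegrable
      rw [Set.uIcc_of_le hpi]
      exact ((hHc p hp).add (continuousOn_const.mul (hΨc p hp))).mul hcos
    have i2 : IntervalIntegrable (fun x => Ψ p x * Real.cos (2 * x))
        MeasureTheory.volume 0 π := by
      apply ContinuousOn.intervalIntegrable
      rw [Set.uIcc_of_le hpi]
      exact (hΨc p hp).mul hcos
    have i3 : IntervalIntegrable (fun x => Real.sin (2 * x) * Real.cos (2 * x))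
        MeasureTheory.volume 0 π := by
      apply Continuous.intervalIntegrable
      fun_prop
    have e : ∫ x in (0:ℝ)..π,
        (p.1 * (1 + p.2) / (1 - p.1 * (1 + p.2) * x) * G (p, x)
          - p.1 * (1 + p.2) * (-2 * Real.sin (2 * x))) * Real.cos (2 * x)
        = ∫ x in (0:ℝ)..π, ((H (p, x) + 4 * Ψ p x) * Real.cos (2 * x)
          + (ν p - 4) * (Ψ p x * Real.cos (2 * x)))
          + (2 * (p.1 * (1 + p.2))) * (Real.sin (2 * x) * Real.cos (2 * x)) := by
      rw [intervalIntegral.integral_of_le hpi, intervalIntegral.integral_of_le hpi,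
        MeasureTheory.integral_Ioc_eq_integral_Ioo, MeasureTheory.integral_Ioc_eq_integral_Ioo]
      refine MeasureTheory.setIntegral_congr_fun measurableSet_Ioo ?_
      intro x hx
      have hx' := Set.Ioo_subset_Icc_self hx
      have h := heq p hp x hx
      rw [Ttde, hw2 p hp x hx', hw1 p hp x hx'] at h
      simp only
      linear_combination (-Real.cos (2 * x)) * h
    rw [e, intervalIntegral.integral_add (i1.add (i2.const_mul _)) (i3.const_mul _),
      intervalIntegral.integral_add i1 (i2.const_mul _), intervalIntegral.integral_const_mul,
      intervalIntegral.integral_const_mul, hid p hp, hsc, hnorm p hp]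
    ring
  have hev : ∀ᶠ p in nhds ((0, 0) : ℝ × ℝ), p ∈ U ∧ ∀ x ∈ Set.Icc (0:ℝ) π,
      |G (p, x) - G ((0, 0), x)| ≤ K * ‖p‖ := 
    Filter.Eventually.and (hUopen.mem_nhds hU0) hK
  obtain ⟨V, hVsub, hVo, hV0⟩ := mem_nhds_iff.1 hev
  refine ⟨2 * (4 * |K| + 64), by positivity, V, fun p hp => (hVsub hp).1, hVo, hV0, ?_⟩
  intro p hpV
  obtain ⟨hp, hKp⟩ := hVsub hpV
  have hn : ‖p‖ ^ 2 ≤ p.1 ^ 2 + p.2 ^ 2 := by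
    rw [Prod.norm_def]
    rcases max_choice ‖p.1‖ ‖p.2‖ with h | h <;> rw [h, Real.norm_eq_abs, sq_abs] <;> nlinarith
  have hbound := intervalIntegral.norm_integral_le_of_norm_le_const (a := 0) (b := π)
    (C := (4 * |K| + 64) * ‖p‖ ^ 2)
    (f := fun x => (p.1 * (1 + p.2) / (1 - p.1 * (1 + p.2) * x) * G (p, x)
        - p.1 * (1 + p.2) * (-2 * Real.sin (2 * x))) * Real.cos (2 * x)) ?_
  · rw [← hkey p hp, Real.norm_eq_abs, abs_mul, sub_zero, abs_of_pos Real.pi_pos,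
      abs_of_pos (half_pos Real.pi_pos)] at hbound
    have h1 : |ν p - 4| ≤ 2 * (4 * |K| + 64) * ‖p‖ ^ 2 := by
      refine le_of_mul_le_mul_right ?_ (half_pos Real.pi_pos)
      linarith
    exact h1.trans (mul_le_mul_of_nonneg_left hn (by positivity))
  · intro x hx
    rw [Set.uIoc_of_le hpi] at hx
    have hx' := Set.Ioc_subset_Icc_self hx
    have hD := hb p hp x hx'
    have hL := hKp x hx'
    rw [hu0 x hx'] at hL
    obtain ⟨ha, -⟩ := hsmall p hp
    generalize p.1 * (1 + p.2) = a at *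
    generalize G (p, x) = g at *
    have hDpos : 0 < 1 - a * x := by linarith
    have hinv : |1 / (1 - a * x)| ≤ 2 := by
      rw [abs_of_pos (by positivity), div_le_iff₀ hDpos]; linarith
    have hs := Real.abs_sin_le_one (2 * x)
    have hc := Real.abs_cos_le_one (2 * x)
    have hnn := norm_nonneg p
    have hsplit : a / (1 - a * x) * g - a * (-2 * Real.sin (2 * x))
        = 1 / (1 - a * x) * (a * (g - -2 * Real.sin (2 * x))
          + a ^ 2 * x * (-2 * Real.sin (2 * x))) := by
      field_simp
      ring
    have hKK : |g - -2 * Real.sin (2 * x)| ≤ |K| * ‖p‖ :=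
      hL.trans (mul_le_mul_of_nonneg_right (le_abs_self _) hnn)
    have hA : |a * (g - -2 * Real.sin (2 * x))| ≤ 2 * ‖p‖ * (|K| * ‖p‖) := by
      rw [abs_mul]; gcongr
    have hB : |a ^ 2 * x * (-2 * Real.sin (2 * x))| ≤ (2 * ‖p‖) ^ 2 * 4 * (2 * 1) := by
      rw [abs_mul, abs_mul, abs_mul, abs_pow, abs_of_nonneg hx'.1, abs_neg, abs_two]
      have := hx'.2.trans hp4
      have := hx'.1
      gcongr
    rw [hsplit, Real.norm_eq_abs, abs_mul, abs_mul]
    calc _ ≤ 2 * (2 * ‖p‖ * (|K| * ‖p‖) + (2 * ‖p‖) ^ 2 * 4 * (2 * 1)) * 1 := by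
          gcongr
          exact (abs_add_le _ _).trans (add_le_add hA hB)
      _ = _ := by ring

end
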